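/- Let k be a field, V a k-vector space, and V₁,…,V_N subspaces of V. Then there exist a basis E of V and pairwise disjoint subsets E₁,…,E_N ⊆ E such that ⋂_{j=1}^N V_j = span(E \ (E₁ ∪ ⋯ ∪ E_N)) and V_j ⊆ span(E \ E_j) for every 1 ≤ j ≤ N. -/

import Mathlib

/-!
Subspaces form a complemented modular lattice, in which everything except the choice of bases takes
place. Going through the `Vⱼ` one at a time, enlarge each to `Hⱼ` so that `Hⱼ` meets the
intersection of the previous ones exactly as `Vⱼ` does, but spans the whole space together with it;
the `Hⱼ` are then mutually transverse and have the same intersection as the `Vⱼ`. Adjoin a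
complement `H₀` of this intersection. Over the indices `0, …, N`, the intersections
`Cᵢ = ⋂_{l ≠ i} Hₗ` decompose `V` as a direct sum with `Hᵢ = ⨁_{l ≠ i} Cₗ` and `C₀ = ⋂ⱼ Vⱼ`. A basis
adapted to this decomposition is as required, with `Eⱼ` its part in `Cⱼ`.
-/

section Lattice

theorem exists_le_codisjoint_inf_eq {α : Type*} [Lattice α] [BoundedOrder α] [IsModularLattice α]
    [ComplementedLattice α] (a b : α) : ∃ c, a ≤ c ∧ Codisjoint c b ∧ c ⊓ b = a ⊓ b := by
  obtain ⟨c, hinf, hcod⟩ :=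
    IsModularLattice.exists_inf_eq_and_codisjoint (le_sup_left : a ≤ a ⊔ b)
  have hac : a ≤ c := hinf ▸ inf_le_right
  refine ⟨c, hac, codisjoint_iff.2 ?_, ?_⟩
  · calc c ⊔ b = a ⊔ b ⊔ c := by rw [sup_right_comm, sup_of_le_right hac]
      _ = ⊤ := hcod.eq_top
  · calc c ⊓ b = (a ⊔ b) ⊓ c ⊓ b := by
          rw [inf_right_comm, inf_of_le_right (le_sup_right : b ≤ a ⊔ b), inf_comm]
      _ = a ⊓ b := by rw [hinf]

variable {α ι : Type*} [CompleteLattice α]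

/-- Transversality of a family in a complete lattice: the order dual of `iSupIndep`, written out to
avoid working in `αᵒᵈ`. A finite family of submodules `f i` of `M` satisfies it iff
`M → ∏ i, M ⧸ f i` is surjective. -/
def iInfIndep (f : ι → α) : Prop :=
  ∀ i, Codisjoint (f i) (⨅ j ≠ i, f j)

variable [IsModularLattice α] {f : ι → α}

theorem iInfIndep.option_elim (hf : iInfIndep f) {d : α} (hd : Codisjoint d (⨅ i, f i)) :
    iInfIndep fun o : Option ι => o.elim d f := by
  rintro (_ | i)
  · simpa [iInf_option] using hd
  · have hsplit : Codisjoint (f i ⊓ ⨅ j ≠ i, f j) d := by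
      rw [← iInf_split_single]
      exact hd.symm
    simpa [iInf_option, inf_comm] using
      (hf i).codisjoint_inf_right_of_codisjoint_inf_left hsplit

theorem exists_le_iInfIndep_iInf_eq [ComplementedLattice α] [Finite ι] (a : ι → α) :
    ∃ h : ι → α, a ≤ h ∧ iInfIndep h ∧ ⨅ i, h i = ⨅ i, a i := by
  induction ι using Finite.induction_empty_option with
  | @of_equiv ι κ e ih =>
    obtain ⟨h, hle, hind, hinf⟩ := ih (a ∘ e)
    refine ⟨h ∘ e.symm, fun i => by simpa using hle (e.symm i), ?_, ?_⟩
    · exact iSupIndep.comp (α := αᵒᵈ) hind e.symm.injective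
    · rw [← e.iInf_comp (g := a)]
      exact e.symm.iInf_comp.trans hinf
  | h_empty => exact ⟨a, le_rfl, fun i => i.elim, rfl⟩
  | @h_option ι _ ih =>
    obtain ⟨h, hle, hind, hinf⟩ := ih fun i => a (some i)
    obtain ⟨d, hd, hcod, hdinf⟩ := exists_le_codisjoint_inf_eq (a none) (⨅ i, h i)
    refine ⟨fun o => o.elim d h, Option.forall.2 ⟨hd, hle⟩, hind.option_elim hcod, ?_⟩
    simpa only [iInf_option, Option.elim_none, Option.elim_some, hinf] using hdinf

theorem iInfIndep.biSup_iInf_ne (hf : iInfIndep f) (hbot : ⨅ i, f i = ⊥) (t : Finset ι) :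
    ⨆ i ∈ t, ⨅ j ≠ i, f j = ⨅ j ∉ t, f j := by
  classical
  induction t using Finset.induction_on with
  | empty => simp [hbot]
  | insert i t hi ih =>
    have hsplit : ⨅ j ∉ t, f j = f i ⊓ ⨅ j ∉ insert i t, f j := by
      rw [iInf_split_single _ i]
      simp [hi, iInf_and]
    have hle : ⨅ j ≠ i, f j ≤ ⨅ j ∉ insert i t, f j :=
      biInf_mono fun j hj => by grind
    rw [Finset.iSup_insert, ih, hsplit, ← sup_inf_assoc_of_le _ hle, (hf i).symm.eq_top, top_inf_eq]

theorem iInfIndep.iSup_iInf_ne [Finite ι] (hf : iInfIndep f) (hbot : ⨅ i, f i = ⊥) :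
    ⨆ i, ⨅ j ≠ i, f j = ⊤ := by
  have := Fintype.ofFinite ι
  simpa using hf.biSup_iInf_ne hbot Finset.univ

theorem iInfIndep.iSup_ne_iInf_ne [Finite ι] (hf : iInfIndep f) (hbot : ⨅ i, f i = ⊥) (i : ι) :
    ⨆ j ≠ i, ⨅ l ≠ j, f l = f i := by
  classical
  have := Fintype.ofFinite ι
  simpa using hf.biSup_iInf_ne hbot (Finset.univ.erase i)

theorem iInfIndep.iSupIndep_iInf_ne [Finite ι] (hf : iInfIndep f) (hbot : ⨅ i, f i = ⊥) :
    iSupIndep fun i => ⨅ j ≠ i, f j := by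
  intro i
  rw [hf.iSup_ne_iInf_ne hbot, disjoint_iff, inf_comm, ← iInf_split_single, hbot]

theorem exists_iSupIndep_option_none_eq_iInf [ComplementedLattice α] [Finite ι] (a : ι → α) :
    ∃ c : Option ι → α, iSupIndep c ∧ ⨆ o, c o = ⊤ ∧ c none = ⨅ i, a i ∧
      ∀ i, a i ≤ ⨆ o ≠ some i, c o := by
  obtain ⟨h, hle, hind, hinf⟩ := exists_le_iInfIndep_iInf_eq a
  obtain ⟨d, hd⟩ := exists_isCompl (⨅ i, h i)
  let g : Option ι → α := fun o => o.elim d h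
  have hg : iInfIndep g := hind.option_elim hd.codisjoint.symm
  have hbot : ⨅ o, g o = ⊥ := (iInf_option g).trans hd.symm.inf_eq_bot
  refine ⟨fun o => ⨅ l ≠ o, g l, hg.iSupIndep_iInf_ne hbot, hg.iSup_iInf_ne hbot, ?_,
    fun i => (hle i).trans_eq (hg.iSup_ne_iInf_ne hbot (some i)).symm⟩
  simpa [iInf_option, g] using hinf

end Lattice

section Span

open Submodule

variable {K V ι : Type*}

theorem span_iUnion_sdiff_biUnion [Semiring K] [AddCommMonoid V] [Module K V]
    {B : ι → Set V} (hB : Pairwise (Function.onFun Disjoint B)) (s : Set ι) :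
    span K ((⋃ i, B i) \ ⋃ i ∈ s, B i) = ⨆ i ∈ sᶜ, span K (B i) := by
  rw [← Set.biUnion_univ, Set.biUnion_sdiff_biUnion_eq (hB.set_pairwise _), span_iUnion₂,
    Set.compl_eq_univ_sdiff]

theorem exists_linearIndepOn_iUnion_span_eq [DivisionRing K] [AddCommGroup V] [Module K V]
    {C : ι → Submodule K V} (hC : iSupIndep C) :
    ∃ B : ι → Set V, Pairwise (Function.onFun Disjoint B) ∧ LinearIndepOn K id (⋃ i, B i) ∧
      ∀ i, span K (B i) = C i := by
  choose B _ hspan hind using fun i => exists_linearIndependent K (C i : Set V)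
  replace hspan : ∀ i, span K (B i) = C i := fun i => (hspan i).trans (span_eq (C i))
  refine ⟨B, fun i j hij => ?_, linearIndepOn_id_iUnion_finite hind fun i t _ hi => ?_, hspan⟩
  · have hdisj : Disjoint (span K (B i)) (span K (B j)) := by
      simpa only [hspan] using hC.pairwiseDisjoint hij
    exact hdisj.of_span₀ fun h0 => (hind i).ne_zero ⟨0, h0⟩ rfl
  · simpa only [hspan] using hC.disjoint_biSup hi

end Span

theorem subspaces_transverse_basis_general {K V ι : Type*} [DivisionRing K] [AddCommGroup V]
    [Module K V] [Finite ι] (W : ι → Submodule K V) :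
    ∃ (E : Set V) (Es : ι → Set V),
      LinearIndependent K ((↑) : E → V) ∧
      Submodule.span K E = ⊤ ∧
      (∀ j, Es j ⊆ E) ∧
      Pairwise (Function.onFun Disjoint Es) ∧
      (⨅ j, W j) = Submodule.span K (E \ ⋃ j, Es j) ∧
      ∀ j, W j ≤ Submodule.span K (E \ Es j) := by
  obtain ⟨C, hC, htop, hnone, hle⟩ := exists_iSupIndep_option_none_eq_iInf W
  obtain ⟨B, hdisj, hind, hspan⟩ := exists_linearIndepOn_iUnion_span_eq hC
  have hsdiff (s : Set (Option ι)) :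
      Submodule.span K ((⋃ o, B o) \ ⋃ o ∈ s, B o) = ⨆ o ∈ sᶜ, C o := by
    simp only [span_iUnion_sdiff_biUnion hdisj, hspan]
  refine ⟨⋃ o, B o, fun j => B (some j), hind, ?_, fun j => Set.subset_iUnion B _,
    hdisj.comp_of_injective (Option.some_injective ι), ?_, fun j => ?_⟩
  · simp only [Submodule.span_iUnion, hspan, htop]
  · simpa [hnone] using (hsdiff (Set.range some)).symm
  · simpa using (hle j).trans_eq (hsdiff {some j}).symm

/-- **Mutual transversality via a basis.** Given subspaces `V₁,…,V_N` of a
`k`-vector space `V`, there exist a basis `E` of `V` and pairwise disjoint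
subsets `E₁,…,E_N ⊆ E` such that `⋂_j V_j = span(E \ ⋃_j E_j)` and
`V_j ⊆ span(E \ E_j)` for each `j`. -/
theorem subspaces_transverse_basis {k V : Type*} [Field k] [AddCommGroup V]
    [Module k V] (N : ℕ) (Vs : Fin N → Submodule k V) :
    ∃ (E : Set V) (Es : Fin N → Set V),
      LinearIndependent k ((↑) : E → V) ∧
      Submodule.span k E = ⊤ ∧
      (∀ j, Es j ⊆ E) ∧
      Pairwise (Function.onFun Disjoint Es) ∧
      (⨅ j, Vs j) = Submodule.span k (E \ ⋃ j, Es j) ∧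
      ∀ j, Vs j ≤ Submodule.span k (E \ Es j) :=
  subspaces_transverse_basis_general Vs
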